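/- arXiv:0708.3218 — 8 statements merged into one kernel-verified Lean document; each statement's English description precedes it below -/
import Mathlib

section
/- Let β ∈ (−1,1). For every pair i, j ∈ {1,2,3}, the region S_{ij} = {(p,q) ∈ Δ₃ × Δ₃ : (A_β q)_i > (A_β q)_k for every k ≠ i, and (p B_β)_j > (p B_β)_l for every l ≠ j} is nonempty, and the interior equilibrium E = ((1/3,1/3,1/3),(1/3,1/3,1/3)) belongs to the topological closure of S_{ij}. -/
/-!
The matrices `A_β` and `B_βᵀ` are both circulant, with first column `(a, b, 0)` equal to `(1, β, 0)`
and `(-β, 1, 0)` respectively, so the barycentre of the simplex equalizes all payoffs. Starting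
from such a fully mixed equalizing strategy, it suffices to find a direction `d` along which the
`i`-th payoff grows fastest: subtracting a multiple of the equalizing strategy makes `d` tangent to
the simplex and changes all payoffs by the same amount, so arbitrarily small steps along `d` make
`i` the unique best reply. For the circulant matrix, the cyclic shifts of `d = (a - b, -b, 0)` do
this, as `d` has payoffs `(a² - ab, -b², -b²)` and `a² - ab + b² > 0` unless `a = b = 0`.
-/

open Filter Matrix Topology

section UniqueBestReply

variable {m n : Type*} [Fintype n]

/-- The mixed strategies of the opponent, who chooses columns, against which the row `i` of the
payoff matrix `M` is the unique best reply. For the column player of a bimatrix game, `M` is the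
transpose of the payoff matrix. -/
def uniqueBestReplyRegion (M : Matrix m n ℝ) (i : m) : Set (n → ℝ) :=
  {q | q ∈ stdSimplex ℝ n ∧ ∀ k, k ≠ i → (M *ᵥ q) k < (M *ᵥ q) i}

lemma sum_add_smul_sub_sum_smul {R : Type*} [Ring R] {q : n → R} (hq : ∑ k, q k = 1)
    (d : n → R) (t : R) :
    ∑ k, (q + t • (d - (∑ l, d l) • q)) k = 1 := by
  simp only [Pi.add_apply, Pi.smul_apply, Pi.sub_apply, smul_eq_mul, Finset.sum_add_distrib,
    ← Finset.mul_sum, Finset.sum_sub_distrib, hq, mul_one, sub_self, mul_zero, add_zero]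

lemma eventually_add_smul_sub_sum_smul_mem_stdSimplex {q : n → ℝ} (hq : ∑ k, q k = 1)
    (hpos : ∀ k, 0 < q k) (d : n → ℝ) :
    ∀ᶠ t in 𝓝 (0 : ℝ), q + t • (d - (∑ l, d l) • q) ∈ stdSimplex ℝ n := by
  have hnonneg : ∀ᶠ t in 𝓝 (0 : ℝ), ∀ k, 0 ≤ (q + t • (d - (∑ l, d l) • q)) k := by
    refine eventually_all.2 fun k => ?_
    have hcont : Continuous fun t : ℝ => (q + t • (d - (∑ l, d l) • q)) k := by fun_prop
    have hpos₀ : 0 < (q + (0 : ℝ) • (d - (∑ l, d l) • q)) k := by simpa using hpos k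
    exact (hcont.continuousAt.eventually_const_lt hpos₀).mono fun _ => le_of_lt
  exact hnonneg.mono fun t ht => ⟨ht, sum_add_smul_sub_sum_smul hq d t⟩

lemma mulVec_add_smul_sub_smul_lt {R : Type*} [CommRing R] [LinearOrder R] [IsStrictOrderedRing R]
    {M : Matrix m n R} {q d : n → R} {i k : m} (hq : (M *ᵥ q) k = (M *ᵥ q) i)
    (hd : (M *ᵥ d) k < (M *ᵥ d) i) (s : R) {t : R} (ht : 0 < t) :
    (M *ᵥ (q + t • (d - s • q))) k < (M *ᵥ (q + t • (d - s • q))) i := by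
  simp only [mulVec_add, mulVec_smul, mulVec_sub, Pi.add_apply, Pi.smul_apply, Pi.sub_apply,
    smul_eq_mul, hq]
  gcongr

theorem mem_closure_uniqueBestReplyRegion {M : Matrix m n ℝ} {q d : n → ℝ} {i : m}
    (hsum : ∑ k, q k = 1) (hpos : ∀ k, 0 < q k) (hq : ∀ k, (M *ᵥ q) k = (M *ᵥ q) i)
    (hd : ∀ k, k ≠ i → (M *ᵥ d) k < (M *ᵥ d) i) :
    q ∈ closure (uniqueBestReplyRegion M i) := by
  have hcont : Continuous fun t : ℝ => q + t • (d - (∑ l, d l) • q) := by fun_prop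
  have hlim : Tendsto (fun t : ℝ => q + t • (d - (∑ l, d l) • q)) (𝓝[>] 0) (𝓝 q) :=
    (hcont.tendsto' 0 q (by simp)).mono_left nhdsWithin_le_nhds
  refine mem_closure_of_tendsto hlim ?_
  have hsimplex := eventually_add_smul_sub_sum_smul_mem_stdSimplex hsum hpos d
  filter_upwards [hsimplex.filter_mono nhdsWithin_le_nhds, self_mem_nhdsWithin] with t hmem ht
  exact ⟨hmem, fun k hk => mulVec_add_smul_sub_smul_lt (hq k) (hd k hk) _ ht⟩

end UniqueBestReply

section Circulant

variable {R G : Type*} [NonUnitalNonAssocSemiring R] [Fintype G] [AddGroup G]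

lemma circulant_mulVec_const (v : G → R) (c : R) :
    circulant v *ᵥ (fun _ => c) = fun _ => (∑ g, v g) * c := by
  ext k
  simp only [mulVec, dotProduct, circulant_apply, ← Finset.sum_mul]
  exact congrArg (· * c) ((Equiv.subLeft k).sum_comp v)

lemma circulant_mulVec_translate (v w : G → R) (i : G) :
    circulant v *ᵥ (fun k => w (k - i)) = fun k => (circulant v *ᵥ w) (k - i) :=
  funext fun k => congrFun₂ (circulant_mul v w) k i

theorem barycenter_mem_closure_uniqueBestReplyRegion_circulant {v w : G → ℝ}
    (hw : ∀ k, k ≠ 0 → (circulant v *ᵥ w) k < (circulant v *ᵥ w) 0) (i : G) :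
    (stdSimplex.barycenter : stdSimplex ℝ G).val ∈
      closure (uniqueBestReplyRegion (circulant v) i) := by
  refine mem_closure_uniqueBestReplyRegion (d := fun k => w (k - i)) stdSimplex.barycenter.2.2
    (fun _ => ?_) (fun k => ?_) fun k hk => ?_
  · exact inv_pos.2 (Nat.cast_pos.2 Fintype.card_pos)
  · have hconst := circulant_mulVec_const v (Fintype.card G : ℝ)⁻¹
    exact (congrFun hconst k).trans (congrFun hconst i).symm
  · simpa only [circulant_mulVec_translate, sub_self] using hw (k - i) (sub_ne_zero.2 hk)

end Circulant

section Shapley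

lemma sq_sub_mul_add_sq_pos {R : Type*} [CommRing R] [LinearOrder R] [IsStrictOrderedRing R]
    {a b : R} (h : a ≠ 0 ∨ b ≠ 0) : 0 < a ^ 2 - a * b + b ^ 2 := by
  rcases h with ha | hb
  · nlinarith [sq_pos_of_ne_zero ha, sq_nonneg (a - 2 * b)]
  · nlinarith [sq_pos_of_ne_zero hb, sq_nonneg (2 * a - b)]

lemma circulant_fin_three_mulVec {R : Type*} [CommRing R] (a b : R) :
    circulant ![a, b, 0] *ᵥ ![a - b, -b, 0] = ![a ^ 2 - a * b, -b ^ 2, -b ^ 2] := by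
  ext k
  fin_cases k <;> simp [mulVec, dotProduct, Fin.sum_univ_three, circulant_apply] <;> ring

lemma third_mem_closure_uniqueBestReplyRegion_circulant {a b : ℝ} (h : a ≠ 0 ∨ b ≠ 0) (i : Fin 3) :
    (fun _ => 1 / 3) ∈ closure (uniqueBestReplyRegion (circulant ![a, b, 0]) i) := by
  have hlt : -b ^ 2 < a ^ 2 - a * b := by linarith [sq_sub_mul_add_sq_pos h]
  have hmax : ∀ k, k ≠ 0 → (circulant ![a, b, 0] *ᵥ ![a - b, -b, 0]) k <
      (circulant ![a, b, 0] *ᵥ ![a - b, -b, 0]) 0 := by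
    rw [circulant_fin_three_mulVec]
    intro k hk
    fin_cases k
    exacts [absurd rfl hk, hlt, hlt]
  have hbary : (stdSimplex.barycenter : stdSimplex ℝ (Fin 3)).val = fun _ => 1 / 3 := by
    ext k
    simp [stdSimplex.barycenter_apply]
  simpa only [hbary] using barycenter_mem_closure_uniqueBestReplyRegion_circulant hmax i

lemma shapley_row_eq_circulant {R : Type*} [Zero R] [One R] (β : R) :
    !![1, 0, β; β, 1, 0; 0, β, 1] = circulant ![1, β, 0] := by
  ext k l
  fin_cases k <;> fin_cases l <;> rfl

lemma shapley_column_transpose_eq_circulant {R : Type*} [Zero R] [One R] [Neg R] (β : R) :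
    !![-β, 1, 0; 0, -β, 1; 1, 0, -β]ᵀ = circulant ![-β, 1, 0] := by
  ext k l
  fin_cases k <;> fin_cases l <;> rfl

theorem stmt1_general (β : ℝ) (i j : Fin 3) :
    let A : Matrix (Fin 3) (Fin 3) ℝ := !![1, 0, β; β, 1, 0; 0, β, 1]
    let B : Matrix (Fin 3) (Fin 3) ℝ := !![-β, 1, 0; 0, -β, 1; 1, 0, -β]
    let S : Set ((Fin 3 → ℝ) × (Fin 3 → ℝ)) :=
      {pq | pq.1 ∈ stdSimplex ℝ (Fin 3) ∧ pq.2 ∈ stdSimplex ℝ (Fin 3) ∧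
        (∀ k, k ≠ i → A.mulVec pq.2 i > A.mulVec pq.2 k) ∧
        (∀ l, l ≠ j → Matrix.vecMul pq.1 B j > Matrix.vecMul pq.1 B l)}
    S.Nonempty ∧
      ((fun _ => (1 : ℝ) / 3, fun _ => (1 : ℝ) / 3) : (Fin 3 → ℝ) × (Fin 3 → ℝ)) ∈ closure S := by
  intro A B S
  have hS : S = uniqueBestReplyRegion Bᵀ j ×ˢ uniqueBestReplyRegion A i := by
    ext ⟨p, q⟩
    simp only [S, uniqueBestReplyRegion, Set.mem_prod, Set.mem_ofPred_eq, mulVec_transpose]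
    tauto
  have hB : Bᵀ = circulant ![-β, 1, 0] := shapley_column_transpose_eq_circulant β
  have hA : A = circulant ![1, β, 0] := shapley_row_eq_circulant β
  have hp : (fun _ => 1 / 3) ∈ closure (uniqueBestReplyRegion Bᵀ j) := by
    rw [hB]
    exact third_mem_closure_uniqueBestReplyRegion_circulant (.inr one_ne_zero) j
  have hq : (fun _ => 1 / 3) ∈ closure (uniqueBestReplyRegion A i) := by
    rw [hA]
    exact third_mem_closure_uniqueBestReplyRegion_circulant (.inl one_ne_zero) i
  have hE : ((fun _ => 1 / 3, fun _ => 1 / 3) : (Fin 3 → ℝ) × (Fin 3 → ℝ)) ∈ closure S := by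
    rw [hS, closure_prod_eq]
    exact ⟨hp, hq⟩
  exact ⟨closure_nonempty_iff.1 ⟨_, hE⟩, hE⟩

end Shapley

/-- For β ∈ (−1,1), each pure-preference region S_{ij} of the
Shapley family is nonempty and the interior equilibrium E lies in its closure. -/
theorem stmt1 (β : ℝ) (hβ : β ∈ Set.Ioo (-1 : ℝ) 1) (i j : Fin 3) :
    let A : Matrix (Fin 3) (Fin 3) ℝ := !![1, 0, β; β, 1, 0; 0, β, 1]
    let B : Matrix (Fin 3) (Fin 3) ℝ := !![-β, 1, 0; 0, -β, 1; 1, 0, -β]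
    let S : Set ((Fin 3 → ℝ) × (Fin 3 → ℝ)) :=
      {pq | pq.1 ∈ stdSimplex ℝ (Fin 3) ∧ pq.2 ∈ stdSimplex ℝ (Fin 3) ∧
        (∀ k, k ≠ i → A.mulVec pq.2 i > A.mulVec pq.2 k) ∧
        (∀ l, l ≠ j → Matrix.vecMul pq.1 B j > Matrix.vecMul pq.1 B l)}
    S.Nonempty ∧ ((fun _ => (1 : ℝ)/3, fun _ => (1 : ℝ)/3) : (Fin 3 → ℝ) × (Fin 3 → ℝ)) ∈ closure S := by
  exact stmt1_general β i j
end

section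
/- For every β ∈ (−1,1), the cubic f_β has exactly one real root ν, and this root satisfies ν ∈ (0,1); indeed f_β(0) = −(1+β) < 0 and f_β(1) = β³ + β² + β + 1 > 0. -/
/-- The cubic governing the clockwise (Shapley) periodic orbit. -/
noncomputable def fShapley (β Z : ℝ) : ℝ :=
  (3*β^2 + 3*β + 3)*Z^3 + (2*β^3 - 2*β^2 - 5*β - 4)*Z^2 + (-β^3 + 4*β + 3)*Z - (1 + β)

/-
A real cubic with two distinct real roots splits over ℝ, and then its discriminant is a square.
The discriminant of `f_β` is `-(1 + β) (β² + β + 1)² q(β)`, where `q` is positive on `(-∞, 2]`, so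
for `-1 < β ≤ 2` there is at most one real root. The sign change of `f_β` between `0` and `1`
provides one and places it in `(0, 1)`. The bound `2` is not sharp: `q` changes sign just above
`2.9`.
-/

open Polynomial

theorem eval_cubic_toPoly {R : Type*} [CommSemiring R] (P : Cubic R) (x : R) :
    P.toPoly.eval x = P.a * x ^ 3 + P.b * x ^ 2 + P.c * x + P.d := by
  simp [Cubic.toPoly]

-- The third root `z` satisfies `a (x + y + z) = -b`, so the factors below are `x - y`, `a (x - z)`
-- and `a (y - z)`; stating them without `z` avoids dividing by `a`, which may vanish.
theorem cubic_discr_eq_sq_of_isRoot_of_ne {R : Type*} [CommRing R] [NoZeroDivisors R]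
    {P : Cubic R} {x y : R} (hx : P.toPoly.IsRoot x) (hy : P.toPoly.IsRoot y) (hxy : x ≠ y) :
    P.discr =
      ((x - y) * (P.a * (2 * x + y) + P.b) * (P.a * (x + 2 * y) + P.b)) ^ 2 := by
  rw [IsRoot.def, eval_cubic_toPoly] at hx hy
  have c_eq : P.c = -(P.a * (x ^ 2 + x * y + y ^ 2) + P.b * (x + y)) := by
    apply mul_left_cancel₀ (sub_ne_zero.mpr hxy)
    linear_combination hx - hy
  have d_eq : P.d = x * y * (P.a * (x + y) + P.b) := by
    linear_combination hx - x * c_eq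
  rw [Cubic.discr, d_eq, c_eq]
  ring

theorem eq_of_isRoot_of_cubic_discr_neg {R : Type*} [CommRing R] [LinearOrder R]
    [IsStrictOrderedRing R] {P : Cubic R} (hP : P.discr < 0) {x y : R}
    (hx : P.toPoly.IsRoot x) (hy : P.toPoly.IsRoot y) : x = y := by
  by_contra hxy
  exact hP.not_ge (cubic_discr_eq_sq_of_isRoot_of_ne hx hy hxy ▸ sq_nonneg _)

theorem exists_mem_Ioo_isRoot_iff_of_cubic_discr_neg {P : Cubic ℝ} (hP : P.discr < 0) {l u : ℝ}
    (hlu : l ≤ u) (hl : P.toPoly.eval l < 0) (hu : 0 < P.toPoly.eval u) :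
    ∃ ν ∈ Set.Ioo l u, ∀ x, P.toPoly.IsRoot x ↔ x = ν := by
  obtain ⟨ν, hν, root_ν⟩ := intermediate_value_Ioo hlu P.toPoly.continuousOn ⟨hl, hu⟩
  refine ⟨ν, hν, fun x => ⟨fun root_x => ?_, fun hx => hx ▸ root_ν⟩⟩
  exact eq_of_isRoot_of_cubic_discr_neg hP root_x root_ν

/-- The coefficients of `fShapley β` bundled as a `Cubic`, which gives access to `Cubic.discr`. -/
def shapleyCubic (β : ℝ) : Cubic ℝ where
  a := 3 * β ^ 2 + 3 * β + 3
  b := 2 * β ^ 3 - 2 * β ^ 2 - 5 * β - 4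
  c := -β ^ 3 + 4 * β + 3
  d := -(1 + β)

theorem eval_shapleyCubic_toPoly (β Z : ℝ) :
    (shapleyCubic β).toPoly.eval Z = fShapley β Z := by
  rw [eval_cubic_toPoly, shapleyCubic, fShapley, ← sub_eq_add_neg]

theorem fShapley_zero (β : ℝ) : fShapley β 0 = -(1 + β) := by
  rw [fShapley]
  ring

theorem fShapley_one (β : ℝ) : fShapley β 1 = β ^ 3 + β ^ 2 + β + 1 := by
  rw [fShapley]
  ring

theorem fShapley_zero_neg {β : ℝ} (hβ : -1 < β) : fShapley β 0 < 0 := by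
  rw [fShapley_zero]
  linarith

theorem fShapley_one_pos {β : ℝ} (hβ : -1 < β) : 0 < fShapley β 1 := by
  have one_add_pos : 0 < 1 + β := by linarith
  calc
    0 < (1 + β) * (1 + β ^ 2) := by positivity
    _ = fShapley β 1 := by rw [fShapley_one]; ring

theorem shapleyCubic_discr (β : ℝ) :
    (shapleyCubic β).discr = -((1 + β) * (β ^ 2 + β + 1) ^ 2 *
      (31 + β + 45 * β ^ 2 + 3 * β ^ 3 + 24 * β ^ 4 + 8 * β ^ 6 - 4 * β ^ 7)) := by
  rw [Cubic.discr, shapleyCubic]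
  ring

theorem shapleyCubic_discr_cofactor_pos {β : ℝ} (hβ : β ≤ 2) :
    0 < 31 + β + 45 * β ^ 2 + 3 * β ^ 3 + 24 * β ^ 4 + 8 * β ^ 6 - 4 * β ^ 7 := by
  have low_pos : 0 < 31 + β + β ^ 2 := by nlinarith [sq_nonneg (2 * β + 1)]
  have middle_pos : 0 < 44 + 3 * β + 24 * β ^ 2 := by nlinarith [sq_nonneg (16 * β + 1)]
  have top_nonneg : 0 ≤ 4 * β ^ 6 * (2 - β) := mul_nonneg (by positivity) (sub_nonneg.mpr hβ)
  calc
    0 < (31 + β + β ^ 2) + β ^ 2 * (44 + 3 * β + 24 * β ^ 2) + 4 * β ^ 6 * (2 - β) :=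
      add_pos_of_pos_of_nonneg (by positivity) top_nonneg
    _ = _ := by ring

theorem shapleyCubic_discr_neg {β : ℝ} (hβ : β ∈ Set.Ioc (-1 : ℝ) 2) :
    (shapleyCubic β).discr < 0 := by
  have one_add_pos : 0 < 1 + β := by linarith [hβ.1]
  have quadratic_pos : 0 < β ^ 2 + β + 1 := by nlinarith [sq_nonneg (2 * β + 1)]
  have cofactor_pos := shapleyCubic_discr_cofactor_pos hβ.2
  rw [shapleyCubic_discr, neg_lt_zero]
  positivity

theorem exists_mem_Ioo_fShapley_eq_zero_iff {β : ℝ} (hβ : β ∈ Set.Ioc (-1 : ℝ) 2) :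
    ∃ ν ∈ Set.Ioo (0 : ℝ) 1, ∀ Z, fShapley β Z = 0 ↔ Z = ν := by
  simp only [← eval_shapleyCubic_toPoly]
  apply exists_mem_Ioo_isRoot_iff_of_cubic_discr_neg (shapleyCubic_discr_neg hβ) zero_le_one
  · rw [eval_shapleyCubic_toPoly]
    exact fShapley_zero_neg hβ.1
  · rw [eval_shapleyCubic_toPoly]
    exact fShapley_one_pos hβ.1

theorem stmt5_general (β : ℝ) (hβ : β ∈ Set.Ioc (-1 : ℝ) 2) :
    fShapley β 0 = -(1 + β) ∧ fShapley β 0 < 0 ∧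
    fShapley β 1 = β ^ 3 + β ^ 2 + β + 1 ∧ 0 < fShapley β 1 ∧
    (∃! ν : ℝ, fShapley β ν = 0) ∧
    (∀ ν : ℝ, fShapley β ν = 0 → ν ∈ Set.Ioo (0 : ℝ) 1) := by
  obtain ⟨ν, hν, root_iff⟩ := exists_mem_Ioo_fShapley_eq_zero_iff hβ
  refine ⟨fShapley_zero β, fShapley_zero_neg hβ.1, fShapley_one β, fShapley_one_pos hβ.1, ?_, ?_⟩
  · exact ⟨ν, (root_iff ν).mpr rfl, fun Z hZ => (root_iff Z).mp hZ⟩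
  · intro Z hZ
    rwa [(root_iff Z).mp hZ]

/-- For β ∈ (−1,1), f_β(0) = −(1+β) < 0, f_β(1) = β³+β²+β+1 > 0,
f_β has exactly one real root ν, and this root lies in (0,1). -/
theorem stmt5 (β : ℝ) (hβ : β ∈ Set.Ioo (-1 : ℝ) 1) :
    fShapley β 0 = -(1 + β) ∧ fShapley β 0 < 0 ∧
    fShapley β 1 = β^3 + β^2 + β + 1 ∧ 0 < fShapley β 1 ∧
    (∃! ν : ℝ, fShapley β ν = 0) ∧
    (∀ ν : ℝ, fShapley β ν = 0 → ν ∈ Set.Ioo (0 : ℝ) 1) :=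
  stmt5_general β ⟨hβ.1, by linarith [hβ.2]⟩
end

section
/- For every β ∈ ℝ, f_β((1+β)/3) = (1/3)(1+β)(β²+β−1)(β²−β+1). Consequently, for β ∈ (−1,1), the number (1+β)/3 is a root of f_β if and only if β = σ; in particular, the unique real root of f_σ is (1+σ)/3, so that as β ↑ σ the clockwise Shapley periodic orbit shrinks to the interior equilibrium. -/
/-!
The value of `f_β` at `(1 + β) / 3` contains the factor `β² + β - 1 = (β - φ⁻¹) (β + φ)`, where
`φ` is the golden ratio and `φ⁻¹` the golden mean; its quadratic factor `β² - β + 1` never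
vanishes. At `σ = φ⁻¹`, where `σ² + σ = 1`, dividing `f_σ` by `Z - (1 + σ) / 3` leaves a quadratic
whose discriminant is a positive multiple of `-(5σ + 3) < 0`, so there is no other real root.
-/

open Real
open scoped goldenRatio

theorem inv_goldenRatio_eq : φ⁻¹ = (√5 - 1) / 2 := by
  rw [inv_goldenRatio]
  ring

theorem sq_add_self_sub_one_eq_mul (x : ℝ) : x ^ 2 + x - 1 = (x - φ⁻¹) * (x + φ) := by
  rw [inv_goldenRatio]
  linear_combination -x * goldenRatio_add_goldenConj - goldenRatio_mul_goldenConj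

theorem inv_goldenRatio_sq_add_self : φ⁻¹ ^ 2 + φ⁻¹ = 1 := by
  rw [← sub_eq_zero, sq_add_self_sub_one_eq_mul, sub_self, zero_mul]

theorem sq_sub_self_add_one_pos (x : ℝ) : 0 < x ^ 2 - x + 1 := by
  nlinarith only [sq_nonneg (2 * x - 1)]

theorem fShapley_one_add_div_three (β : ℝ) :
    fShapley β ((1 + β) / 3) = (1 / 3) * (1 + β) * (β ^ 2 + β - 1) * (β ^ 2 - β + 1) := by
  unfold fShapley
  ring

theorem fShapley_one_add_div_three_eq_zero_iff {β : ℝ} :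
    fShapley β ((1 + β) / 3) = 0 ↔ β = -1 ∨ β = φ⁻¹ ∨ β = -φ := by
  have hβ : β ^ 2 - β + 1 ≠ 0 := (sq_sub_self_add_one_pos β).ne'
  have hthird : (1 / 3 : ℝ) ≠ 0 := by norm_num
  rw [fShapley_one_add_div_three, sq_add_self_sub_one_eq_mul, mul_eq_zero_iff_right hβ,
    mul_eq_zero, mul_eq_zero_iff_left hthird, mul_eq_zero, sub_eq_zero, add_comm 1 β,
    add_eq_zero_iff_eq_neg, add_eq_zero_iff_eq_neg]

section SqAddSelfEqOne

variable {σ : ℝ}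

theorem fShapley_eq_mul_of_sq_add_self_eq_one (hσ : σ ^ 2 + σ = 1) (Z : ℝ) :
    fShapley σ Z = 3 * (Z - (1 + σ) / 3) * (2 * (Z * Z) + (σ - 2) * Z + 1) := by
  unfold fShapley
  linear_combination (3 * Z ^ 3 + (2 * σ - 4) * Z ^ 2 + (2 - σ) * Z) * hσ

theorem discrim_eq_of_sq_add_self_eq_one (hσ : σ ^ 2 + σ = 1) :
    discrim 2 (σ - 2) 1 = -(5 * σ + 3) := by
  unfold discrim
  linear_combination hσ

theorem fShapley_eq_zero_iff_of_sq_add_self_eq_one (hpos : 0 < σ) (hσ : σ ^ 2 + σ = 1) {Z : ℝ} :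
    fShapley σ Z = 0 ↔ Z = (1 + σ) / 3 := by
  have hdiscrim : discrim 2 (σ - 2) 1 < 0 := by
    rw [discrim_eq_of_sq_add_self_eq_one hσ]
    linarith only [hpos]
  have hquad : 2 * (Z * Z) + (σ - 2) * Z + 1 ≠ 0 :=
    quadratic_ne_zero_of_discrim_ne_sq (fun s => (hdiscrim.trans_le (sq_nonneg s)).ne) Z
  rw [fShapley_eq_mul_of_sq_add_self_eq_one hσ, mul_eq_zero_iff_right hquad,
    mul_eq_zero_iff_left three_ne_zero, sub_eq_zero]

end SqAddSelfEqOne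

theorem stmt6_general :
    (∀ β : ℝ, fShapley β ((1 + β) / 3) =
      (1 / 3) * (1 + β) * (β ^ 2 + β - 1) * (β ^ 2 - β + 1)) ∧
    (∀ β : ℝ, fShapley β ((1 + β) / 3) = 0 ↔ β = -1 ∨ β = φ⁻¹ ∨ β = -φ) ∧
    (∀ ν : ℝ, fShapley φ⁻¹ ν = 0 ↔ ν = (1 + φ⁻¹) / 3) :=
  ⟨fShapley_one_add_div_three, fun _ => fShapley_one_add_div_three_eq_zero_iff, fun _ =>
    fShapley_eq_zero_iff_of_sq_add_self_eq_one (inv_pos.2 goldenRatio_pos)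
      inv_goldenRatio_sq_add_self⟩

/-- f_β((1+β)/3) = (1/3)(1+β)(β²+β−1)(β²−β+1); for β ∈ (−1,1) the
number (1+β)/3 is a root of f_β iff β = σ; and the unique real root of f_σ is
(1+σ)/3 (σ = (√5−1)/2 the golden mean). -/
theorem stmt6 :
    (∀ β : ℝ, fShapley β ((1 + β)/3) = (1/3)*(1 + β)*(β^2 + β - 1)*(β^2 - β + 1)) ∧
    (∀ β ∈ Set.Ioo (-1 : ℝ) 1,
      (fShapley β ((1 + β)/3) = 0 ↔ β = (Real.sqrt 5 - 1)/2)) ∧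
    (∀ ν : ℝ, fShapley ((Real.sqrt 5 - 1)/2) ν = 0 ↔ ν = (1 + (Real.sqrt 5 - 1)/2)/3) := by
  obtain ⟨hvalue, hzero, hunique⟩ := stmt6_general
  refine inv_goldenRatio_eq ▸ ⟨hvalue, fun β hβ => ?_, hunique⟩
  rw [hzero, or_iff_right hβ.1.ne', or_iff_left ((neg_lt_neg one_lt_goldenRatio).trans hβ.1).ne']
end

section
/- Let β ∈ (−1,1) with β ≠ σ, and let ν be the unique real root of f_β. Then, with m₁ = 1 − ν − νβ and m₃ = −β + 2νβ − 1 + 2ν from the clockwise solution formulas, one has m₁ ≠ m₃; equivalently, ν ≠ (2+β)/(3(1+β)). (This is the nondegeneracy of the clockwise Shapley orbit: the strict inequality m₁ = m₂ > m₃ can only fail at β = σ.) -/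
/-! The equation `m₁ = m₃` is linear in `ν`, so it determines `ν` as a rational function of `β`.
Evaluated there, the cubic `f_β` is a nonvanishing multiple of `β² + β - 1`, whose only root above
`-1` is the golden mean. -/

theorem clockwise_m₁_eq_m₃_iff {β : ℝ} (hβ : β ≠ -1) (ν : ℝ) :
    1 - ν - ν * β = -β + 2 * ν * β - 1 + 2 * ν ↔ ν = (2 + β) / (3 * (1 + β)) := by
  have hden : 3 * (1 + β) ≠ 0 := mul_ne_zero three_ne_zero fun h => hβ (by linarith)
  rw [eq_div_iff hden]
  constructor <;> intro h <;> linarith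

theorem fShapley_two_add_div {β : ℝ} (hβ : β ≠ -1) :
    fShapley β ((2 + β) / (3 * (1 + β))) =
      -((β ^ 2 + β - 1) * (β ^ 2 + β + 1) ^ 2) / (9 * (1 + β) ^ 3) := by
  have hden : 1 + β ≠ 0 := fun h => hβ (by linarith)
  unfold fShapley
  field_simp
  ring

theorem fShapley_two_add_div_eq_zero_iff {β : ℝ} (hβ : β ≠ -1) :
    fShapley β ((2 + β) / (3 * (1 + β))) = 0 ↔ β ^ 2 + β = 1 := by
  have hden : 9 * (1 + β) ^ 3 ≠ 0 :=
    mul_ne_zero (by norm_num) (pow_ne_zero 3 fun h => hβ (by linarith))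
  have hfactor : (β ^ 2 + β + 1) ^ 2 ≠ 0 :=
    pow_ne_zero 2 (show 0 < β ^ 2 + β + 1 by nlinarith [sq_nonneg (2 * β + 1)]).ne'
  rw [fShapley_two_add_div hβ, div_eq_zero_iff, or_iff_left hden, neg_eq_zero,
    mul_eq_zero, or_iff_left hfactor, sub_eq_zero]

theorem sq_add_self_eq_one_iff (x : ℝ) :
    x ^ 2 + x = 1 ↔ x = (Real.sqrt 5 - 1) / 2 ∨ x = -(Real.sqrt 5 + 1) / 2 := by
  have hfactor : x ^ 2 + x - 1 = (x - (Real.sqrt 5 - 1) / 2) * (x - -(Real.sqrt 5 + 1) / 2) := by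
    linear_combination (1 / 4) * Real.sq_sqrt (show (0 : ℝ) ≤ 5 by norm_num)
  rw [← sub_eq_zero, hfactor, mul_eq_zero, sub_eq_zero, sub_eq_zero]

theorem eq_goldenMean_of_sq_add_self_eq_one {x : ℝ} (hx : -1 < x) (h : x ^ 2 + x = 1) :
    x = (Real.sqrt 5 - 1) / 2 := by
  have hsqrt : 1 < Real.sqrt 5 := Real.lt_sqrt_of_sq_lt (by norm_num)
  exact ((sq_add_self_eq_one_iff x).mp h).resolve_right (by linarith)

theorem stmt9_general (β ν : ℝ) (hβ : β ≠ -1) (hβσ : β ^ 2 + β ≠ 1) (hν : fShapley β ν = 0) :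
    (1 - ν - ν * β) ≠ (-β + 2 * ν * β - 1 + 2 * ν) ∧ ν ≠ (2 + β) / (3 * (1 + β)) := by
  have hne : ν ≠ (2 + β) / (3 * (1 + β)) := by
    rintro rfl
    exact hβσ ((fShapley_two_add_div_eq_zero_iff hβ).mp hν)
  exact ⟨mt (clockwise_m₁_eq_m₃_iff hβ ν).mp hne, hne⟩

/-- for β ∈ (−1,1) with β ≠ σ and ν the (unique) real root of f_β,
the clockwise solution values m₁ = 1−ν−νβ and m₃ = −β+2νβ−1+2ν are distinct;
equivalently ν ≠ (2+β)/(3(1+β)). -/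
theorem stmt9 (β ν : ℝ) (hβ : β ∈ Set.Ioo (-1 : ℝ) 1)
    (hβσ : β ≠ (Real.sqrt 5 - 1)/2) (hν : fShapley β ν = 0) :
    (1 - ν - ν*β) ≠ (-β + 2*ν*β - 1 + 2*ν) ∧ ν ≠ (2 + β)/(3*(1 + β)) :=
  stmt9_general β ν hβ.1.ne' (mt (eq_goldenMean_of_sq_add_self_eq_one hβ.1) hβσ) hν
end

section
/- For every β ∈ (0,1): g_β(0) = −β² < 0, g_β(1/3) = (2β³+1)/9 > 0, and g_β(1) < 0. Consequently the cubic g_β has exactly three real roots: one in the interval (0,1/3), one in the interval (1/3,1), and one in the interval (1,∞). -/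
/-- The cubic governing the anticlockwise (anti-Shapley) periodic orbit. -/
noncomputable def gAnti (β Z : ℝ) : ℝ :=
  (3*β^3 + 3*β^2 + 3*β)*Z^3 - (5*β^3 + 7*β^2 + 4*β + 2)*Z^2
    + (2*β^3 + 5*β^2 + β + 1)*Z - β^2

/-!
The value of `gAnti β` is negative at `0`, positive at `1/3`, negative at `1`, and, since the
leading coefficient is positive for `β > 0`, positive near infinity. The intermediate value theorem
gives a root in `(0, 1/3)`, in `(1/3, 1)` and in `(1, ∞)`, and a cubic has no others.
-/

section Polynomial

open Polynomial Set Filter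

variable {p : ℝ[X]} {u v w : ℝ}

theorem degree_pos_of_leadingCoeff_nonneg_of_eval_neg (hlead : 0 ≤ p.leadingCoeff)
    (hw : p.eval w < 0) : 0 < p.degree := by
  by_contra! hdeg
  rw [eq_C_of_degree_le_zero hdeg, leadingCoeff_C] at hlead
  rw [eq_C_of_degree_le_zero hdeg, eval_C] at hw
  exact hlead.not_gt hw

theorem exists_isRoot_mem_Ioi_of_eval_neg (hlead : 0 ≤ p.leadingCoeff) (hw : p.eval w < 0) :
    ∃ x ∈ Ioi w, p.IsRoot x := by
  have htop : Tendsto (p.eval ·) atTop atTop :=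
    p.tendsto_atTop_of_leadingCoeff_nonneg
      (degree_pos_of_leadingCoeff_nonneg_of_eval_neg hlead hw) hlead
  exact intermediate_value_Ioi p.continuousOn htop hw

theorem exists_roots_eq_triple_of_eval_alternating (hdeg : p.natDegree ≤ 3)
    (hlead : 0 ≤ p.leadingCoeff)
    (huv : u ≤ v) (hvw : v ≤ w) (hu : p.eval u < 0) (hv : 0 < p.eval v) (hw : p.eval w < 0) :
    ∃ r ∈ Ioo u v, ∃ s ∈ Ioo v w, ∃ t ∈ Ioi w, p.roots = {r, s, t} := by
  obtain ⟨r, hr, hpr⟩ := intermediate_value_Ioo huv p.continuousOn ⟨hu, hv⟩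
  obtain ⟨s, hs, hps⟩ := intermediate_value_Ioo' hvw p.continuousOn ⟨hw, hv⟩
  obtain ⟨t, ht, hpt⟩ := exists_isRoot_mem_Ioi_of_eval_neg hlead hw
  have hrs : r < s := hr.2.trans hs.1
  have hst : s < t := hs.2.trans ht
  have hp0 : p ≠ 0 := by rintro rfl; simp at hu
  refine ⟨r, hr, s, hs, t, ht, ?_⟩
  have hroots : p.roots = ({r, s, t} : Finset ℝ).val := by
    refine roots_eq_of_natDegree_le_card_of_ne_zero ?_ ?_ hp0
    · simpa using ⟨hpr, hps, hpt⟩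
    · rwa [Finset.card_eq_three.mpr ⟨r, s, t, hrs.ne, (hrs.trans hst).ne, hst.ne, rfl⟩]
  simpa [hrs.ne, (hrs.trans hst).ne, hst.ne] using hroots

theorem existsUnique_isRoot_of_natDegree_le_three (hdeg : p.natDegree ≤ 3)
    (hlead : 0 ≤ p.leadingCoeff) (huv : u ≤ v) (hvw : v ≤ w)
    (hu : p.eval u < 0) (hv : 0 < p.eval v) (hw : p.eval w < 0) :
    (∃! x, x ∈ Ioo u v ∧ p.IsRoot x) ∧ (∃! x, x ∈ Ioo v w ∧ p.IsRoot x) ∧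
      (∃! x, x ∈ Ioi w ∧ p.IsRoot x) ∧
      ∀ x, p.IsRoot x → x ∈ Ioo u v ∪ Ioo v w ∪ Ioi w := by
  obtain ⟨r, hr, s, hs, t, ht, hroots⟩ :=
    exists_roots_eq_triple_of_eval_alternating hdeg hlead huv hvw hu hv hw
  have hp0 : p ≠ 0 := by rintro rfl; simp at hu
  have isRoot_iff (x : ℝ) : p.IsRoot x ↔ x = r ∨ x = s ∨ x = t := by
    rw [← mem_roots hp0, hroots]
    simp only [Multiset.insert_eq_cons, Multiset.mem_cons, Multiset.mem_singleton]
  simp only [isRoot_iff, mem_Ioo, mem_Ioi, mem_union] at hr hs ht ⊢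
  refine ⟨⟨r, ?_, ?_⟩, ⟨s, ?_, ?_⟩, ⟨t, ?_, ?_⟩, ?_⟩ <;> grind

end Polynomial

/-- `gAnti β` as an element of Mathlib's type of cubics, which gives access to its polynomial. -/
noncomputable def gAntiCubic (β : ℝ) : Cubic ℝ where
  a := 3 * β ^ 3 + 3 * β ^ 2 + 3 * β
  b := -(5 * β ^ 3 + 7 * β ^ 2 + 4 * β + 2)
  c := 2 * β ^ 3 + 5 * β ^ 2 + β + 1
  d := -β ^ 2

theorem eval_toPoly_gAntiCubic (β x : ℝ) : (gAntiCubic β).toPoly.eval x = gAnti β x := by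
  simp only [gAntiCubic, Cubic.toPoly, Polynomial.eval_add, Polynomial.eval_mul,
    Polynomial.eval_pow, Polynomial.eval_C, Polynomial.eval_X, gAnti]
  ring

theorem isRoot_toPoly_gAntiCubic {β x : ℝ} : (gAntiCubic β).toPoly.IsRoot x ↔ gAnti β x = 0 := by
  rw [Polynomial.IsRoot.def, eval_toPoly_gAntiCubic]

theorem gAnti_zero (β : ℝ) : gAnti β 0 = -β ^ 2 := by
  simp [gAnti]

theorem gAnti_one_third (β : ℝ) : gAnti β (1 / 3) = (2 * β ^ 3 + 1) / 9 := by
  unfold gAnti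
  ring

theorem gAnti_one (β : ℝ) : gAnti β 1 = -1 := by
  unfold gAnti
  ring

theorem stmt10_general (β : ℝ) (hβ : 0 < β) :
    gAnti β 0 = -β^2 ∧ gAnti β 0 < 0 ∧
    gAnti β (1/3) = (2*β^3 + 1)/9 ∧ 0 < gAnti β (1/3) ∧
    gAnti β 1 < 0 ∧
    (∃! x : ℝ, x ∈ Set.Ioo (0 : ℝ) (1/3) ∧ gAnti β x = 0) ∧
    (∃! x : ℝ, x ∈ Set.Ioo (1/3 : ℝ) 1 ∧ gAnti β x = 0) ∧
    (∃! x : ℝ, x ∈ Set.Ioi (1 : ℝ) ∧ gAnti β x = 0) ∧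
    (∀ x : ℝ, gAnti β x = 0 →
      x ∈ Set.Ioo (0 : ℝ) (1/3) ∪ Set.Ioo (1/3 : ℝ) 1 ∪ Set.Ioi (1 : ℝ)) := by
  have hzero : gAnti β 0 < 0 := by rw [gAnti_zero]; exact neg_neg_of_pos (by positivity)
  have hthird : 0 < gAnti β (1 / 3) := by rw [gAnti_one_third]; positivity
  have hone : gAnti β 1 < 0 := by rw [gAnti_one]; exact neg_one_lt_zero
  have ha : 0 < (gAntiCubic β).a := by unfold gAntiCubic; positivity
  refine ⟨gAnti_zero β, hzero, gAnti_one_third β, hthird, hone, ?_⟩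
  simp only [← isRoot_toPoly_gAntiCubic]
  simp only [← eval_toPoly_gAntiCubic] at hzero hthird hone
  exact existsUnique_isRoot_of_natDegree_le_three
    (Cubic.natDegree_of_a_ne_zero ha.ne').le
    (by rw [Cubic.leadingCoeff_of_a_ne_zero ha.ne']; exact ha.le)
    (by norm_num) (by norm_num) hzero hthird hone

/-- for β ∈ (0,1), g_β(0) = −β² < 0, g_β(1/3) = (2β³+1)/9 > 0 and
g_β(1) < 0; consequently g_β has exactly three real roots, one in (0,1/3), one
in (1/3,1) and one in (1,∞). -/
theorem stmt10 (β : ℝ) (hβ : β ∈ Set.Ioo (0 : ℝ) 1) :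
    gAnti β 0 = -β^2 ∧ gAnti β 0 < 0 ∧
    gAnti β (1/3) = (2*β^3 + 1)/9 ∧ 0 < gAnti β (1/3) ∧
    gAnti β 1 < 0 ∧
    (∃! x : ℝ, x ∈ Set.Ioo (0 : ℝ) (1/3) ∧ gAnti β x = 0) ∧
    (∃! x : ℝ, x ∈ Set.Ioo (1/3 : ℝ) 1 ∧ gAnti β x = 0) ∧
    (∃! x : ℝ, x ∈ Set.Ioi (1 : ℝ) ∧ gAnti β x = 0) ∧
    (∀ x : ℝ, gAnti β x = 0 →
      x ∈ Set.Ioo (0 : ℝ) (1/3) ∪ Set.Ioo (1/3 : ℝ) 1 ∪ Set.Ioi (1 : ℝ)) :=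
  stmt10_general β hβ.1
end

section
/- For every β ∈ ℝ, g_β((1−β)/3) = −(1/9)(β²+β−1)(β²+β+1)². Consequently, for β ∈ (0,1), the number (1−β)/3 is a root of g_β if and only if β = σ; in particular the strict inequality m₂ = m₃ > m₁ defining the anticlockwise orbit (which fails exactly when μ = (1−β)/3) can only break down at β = σ. -/
theorem gAnti_one_sub_div_three (β : ℝ) :
    gAnti β ((1 - β)/3) = -(1/9)*(β^2 + β - 1)*(β^2 + β + 1)^2 := by
  unfold gAnti
  ring

theorem sq_add_self_add_one_pos {R : Type*} [CommRing R] [LinearOrder R] [IsStrictOrderedRing R]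
    (x : R) : 0 < x^2 + x + 1 := by
  have hsquare : 4*(x^2 + x + 1) = (2*x + 1)^2 + 3 := by ring
  have hpos : 0 < 4*(x^2 + x + 1) := hsquare ▸ by positivity
  exact pos_of_mul_pos_right hpos zero_le_four

theorem gAnti_one_sub_div_three_eq_zero_iff (β : ℝ) :
    gAnti β ((1 - β)/3) = 0 ↔ β^2 + β - 1 = 0 := by
  have hpos := sq_add_self_add_one_pos β
  simp [gAnti_one_sub_div_three, hpos.ne']

theorem sq_add_self_sub_one_eq_zero_iff (x : ℝ) :
    x^2 + x - 1 = 0 ↔ x = (Real.sqrt 5 - 1)/2 ∨ x = -(Real.sqrt 5 + 1)/2 := by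
  have hdiscrim : discrim (1 : ℝ) 1 (-1) = Real.sqrt 5 * Real.sqrt 5 := by
    rw [Real.mul_self_sqrt (by norm_num), discrim]
    norm_num
  convert quadratic_eq_zero_iff one_ne_zero hdiscrim x using 3 <;> ring

theorem stmt11_general :
    (∀ β : ℝ, gAnti β ((1 - β)/3) = -(1/9)*(β^2 + β - 1)*(β^2 + β + 1)^2) ∧
    (∀ β : ℝ, gAnti β ((1 - β)/3) = 0 ↔
      β = (Real.sqrt 5 - 1)/2 ∨ β = -(Real.sqrt 5 + 1)/2) :=
  ⟨gAnti_one_sub_div_three, fun β =>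
    (gAnti_one_sub_div_three_eq_zero_iff β).trans (sq_add_self_sub_one_eq_zero_iff β)⟩

/-- g_β((1−β)/3) = −(1/9)(β²+β−1)(β²+β+1)²; hence for β ∈ (0,1)
the number (1−β)/3 is a root of g_β iff β = σ = (√5−1)/2. -/
theorem stmt11 :
    (∀ β : ℝ, gAnti β ((1 - β)/3) = -(1/9)*(β^2 + β - 1)*(β^2 + β + 1)^2) ∧
    (∀ β ∈ Set.Ioo (0 : ℝ) 1,
      (gAnti β ((1 - β)/3) = 0 ↔ β = (Real.sqrt 5 - 1)/2)) :=
  ⟨stmt11_general.1, fun β hβ => (stmt11_general.2 β).trans <|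
    or_iff_left fun h => by linarith [hβ.1, Real.sqrt_nonneg 5]⟩
end

section
/- Let β ∈ (0,1] and let μ ∈ ℝ satisfy g_β(μ) = 0. Define m₁, m₂, m₃, n₁, n₂, n₃ by the anticlockwise solution formulas, and set δ = β(m₂ − m₁) + (1+β)(n₁ − n₃). Then the five periodicity equations of the anticlockwise (anti-Shapley) orbit hold: n₁·β = n₂·(δ + n₁ − n₃ + β); n₁ − n₃ + n₂·β + δ = n₃·(δ + n₁ − n₃ + β); n₁·β + β·δ = n₁·(δ + n₁ − n₃ + β); m₂·β + n₁ − n₃ = m₂·(δ + n₁ − n₃ + β); and m₂·β − β·δ = m₁·(δ + n₁ − n₃ + β). -/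
/-! Write `e = n₁ - n₃` and let `ρ = δ + e + β` be the common right-hand factor of the five
equations. The solution formulas amount to `n₁ = β(1 - μ)`, `n₂ = e + 1 - β + 2βμ`, `n₃ = n₁ - e`,
which gives `n₁ + n₂ + n₃ = 1 + β` and `m₁ + 2m₂ = 1 - β`. By these two conservation laws the
equations for `n₃` and `m₁` follow from the others, and the equation for `n₁` is a multiple
of the one for `m₂`. Two equations remain, `μρ = μβ + e` and `n₂ρ = n₁β`.
The formula for `e` is a quadratic in `μ`, and `g_β(μ) = 0` turns `μe` into a linear polynomial
in `μ`; reducing with these two relations proves both equations. -/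

section PeriodicityReduction

variable {R : Type*} [CommRing R] {β δ m₁ m₂ n₁ n₂ n₃ : R}

theorem n₃_periodicity_of_sum_eq (hsum : n₁ + n₂ + n₃ = 1 + β)
    (h₂ : n₁ * β = n₂ * (δ + n₁ - n₃ + β))
    (h₁ : n₁ * β + β * δ = n₁ * (δ + n₁ - n₃ + β)) :
    n₁ - n₃ + n₂ * β + δ = n₃ * (δ + n₁ - n₃ + β) := by
  linear_combination (-(δ + n₁ - n₃)) * hsum - h₂ - h₁

theorem n₁_periodicity_of_m₂_periodicity (hn₁ : n₁ = β * (1 - m₂))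
    (h : m₂ * β + n₁ - n₃ = m₂ * (δ + n₁ - n₃ + β)) :
    n₁ * β + β * δ = n₁ * (δ + n₁ - n₃ + β) := by
  linear_combination (-(δ + n₁ - n₃)) * hn₁ - β * h

theorem m₁_periodicity_of_m₂_periodicity (hsum : m₁ + 2 * m₂ = 1 - β)
    (hδ : δ = β * (m₂ - m₁) + (1 + β) * (n₁ - n₃))
    (h : m₂ * β + n₁ - n₃ = m₂ * (δ + n₁ - n₃ + β)) :
    m₂ * β - β * δ = m₁ * (δ + n₁ - n₃ + β) := by
  linear_combination -hδ - (δ + n₁ - n₃) * hsum - 2 * h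

end PeriodicityReduction

/-- The cubic `g_β` over an arbitrary commutative ring; over `ℝ` it is `gAnti`. -/
def antiShapleyCubic {R : Type*} [CommRing R] (β Z : R) : R :=
  (3 * β ^ 3 + 3 * β ^ 2 + 3 * β) * Z ^ 3 - (5 * β ^ 3 + 7 * β ^ 2 + 4 * β + 2) * Z ^ 2
    + (2 * β ^ 3 + 5 * β ^ 2 + β + 1) * Z - β ^ 2

section Solution

variable {K : Type*} [Field K] {β μ : K}

/-- The difference `n₁ - n₃` of the anticlockwise solution, with the part divisible by
`1 + β + β²` split off. -/
def antiShapleyGap (β μ : K) : K :=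
  (β ^ 3 + 2 * β ^ 2 - (5 * β ^ 3 + 7 * β ^ 2 + 4 * β + 2) * μ) / (1 + β + β ^ 2) + 3 * β * μ ^ 2

/-- The common factor `δ + n₁ - n₃ + β` on the right of the periodicity equations, with `δ`
expressed through `β`, `μ` and the gap `n₁ - n₃`. -/
def antiShapleyFactor (β μ : K) : K :=
  β * (3 * μ + β) + (2 + β) * antiShapleyGap β μ

theorem denom_mul_antiShapleyGap (hβ : 1 + β + β ^ 2 ≠ 0) :
    (1 + β + β ^ 2) * antiShapleyGap β μ =
      β ^ 3 + 2 * β ^ 2 - (5 * β ^ 3 + 7 * β ^ 2 + 4 * β + 2) * μ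
        + 3 * β * (1 + β + β ^ 2) * μ ^ 2 := by
  unfold antiShapleyGap
  field_simp

theorem denom_mul_root_mul_antiShapleyGap (hβ : 1 + β + β ^ 2 ≠ 0) (hμ : antiShapleyCubic β μ = 0) :
    (1 + β + β ^ 2) * (μ * antiShapleyGap β μ) = β ^ 2 - (β ^ 3 + 3 * β ^ 2 + β + 1) * μ := by
  unfold antiShapleyCubic at hμ
  linear_combination μ * denom_mul_antiShapleyGap (μ := μ) hβ + hμ

theorem root_mul_antiShapleyFactor (hβ : 1 + β + β ^ 2 ≠ 0) (hμ : antiShapleyCubic β μ = 0) :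
    μ * antiShapleyFactor β μ = μ * β + antiShapleyGap β μ := by
  apply mul_left_cancel₀ hβ
  unfold antiShapleyFactor
  linear_combination
    (2 + β) * denom_mul_root_mul_antiShapleyGap hβ hμ - denom_mul_antiShapleyGap (μ := μ) hβ

theorem n₂_mul_antiShapleyFactor (hβ : 1 + β + β ^ 2 ≠ 0) (hμ : antiShapleyCubic β μ = 0) :
    (antiShapleyGap β μ + 1 - β + 2 * β * μ) * antiShapleyFactor β μ = β ^ 2 * (1 - μ) := by
  set e := antiShapleyGap β μ
  set ρ := antiShapleyFactor β μ
  have gap : (1 + β + β ^ 2) * e = _ := denom_mul_antiShapleyGap hβ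
  have mul_gap : (1 + β + β ^ 2) * (μ * e) = _ := denom_mul_root_mul_antiShapleyGap hβ hμ
  have mul_factor : μ * ρ = μ * β + e := root_mul_antiShapleyFactor hβ hμ
  have factor : ρ = β * (3 * μ + β) + (2 + β) * e := rfl
  apply mul_left_cancel₀ hβ
  calc (1 + β + β ^ 2) * ((e + 1 - β + 2 * β * μ) * ρ)
      = (3 * β * (1 + β + β ^ 2) * μ - (3 * β ^ 3 + 5 * β ^ 2 + 2 * β + 2)) * (μ * ρ)
          + (2 * β ^ 2 + 1) * ρ := by
        linear_combination ρ * gap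
    _ = β * ((1 + β + β ^ 2) * (3 * (μ * e) - e)
          + 3 * β * (1 + β + β ^ 2) * μ ^ 2 + (1 - 2 * β + β ^ 2 - 3 * β ^ 3) * μ
          + β * (2 * β ^ 2 + 1)) := by
        rw [mul_factor, factor]
        ring
    _ = (1 + β + β ^ 2) * (β ^ 2 * (1 - μ)) := by
        linear_combination 3 * β * mul_gap - β * gap

theorem stmt12_general (hβ : 1 + β + β ^ 2 ≠ 0) (hμ : antiShapleyCubic β μ = 0)
    {m₁ m₂ n₁ n₂ n₃ δ : K}
    (hm₂ : m₂ = μ)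
    (hm₁ : m₁ = 1 - β - 2 * μ)
    (hn₁ : n₁ = β - μ * β)
    (hn₂ : n₂ = (2 * β ^ 2 + 1 - 3 * μ * β ^ 3 - 5 * μ * β ^ 2 - 2 * μ * β - 2 * μ
        + 3 * μ ^ 2 * β ^ 2 + 3 * μ ^ 2 * β + 3 * μ ^ 2 * β ^ 3) / (1 + β + β ^ 2))
    (hn₃ : n₃ = -(β ^ 2 - β - 4 * μ * β ^ 3 - 6 * μ * β ^ 2 - 3 * μ * β - 2 * μ
        + 3 * μ ^ 2 * β ^ 2 + 3 * μ ^ 2 * β + 3 * μ ^ 2 * β ^ 3) / (1 + β + β ^ 2))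
    (hδ : δ = β * (m₂ - m₁) + (1 + β) * (n₁ - n₃)) :
    n₁ * β = n₂ * (δ + n₁ - n₃ + β) ∧
    n₁ - n₃ + n₂ * β + δ = n₃ * (δ + n₁ - n₃ + β) ∧
    n₁ * β + β * δ = n₁ * (δ + n₁ - n₃ + β) ∧
    m₂ * β + n₁ - n₃ = m₂ * (δ + n₁ - n₃ + β) ∧
    m₂ * β - β * δ = m₁ * (δ + n₁ - n₃ + β) := by
  have gap : n₁ - n₃ = antiShapleyGap β μ := by
    rw [hn₁, hn₃, antiShapleyGap]; field_simp; ring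
  have n₂_eq : n₂ = antiShapleyGap β μ + 1 - β + 2 * β * μ := by
    rw [hn₂, antiShapleyGap]; field_simp; ring
  have factor : δ + n₁ - n₃ + β = antiShapleyFactor β μ := by
    rw [antiShapleyFactor, ← gap, hδ, hm₂, hm₁]; ring
  have n₂_periodicity : n₁ * β = n₂ * (δ + n₁ - n₃ + β) := by
    rw [factor, n₂_eq, n₂_mul_antiShapleyFactor hβ hμ, hn₁]; ring
  have m₂_periodicity : m₂ * β + n₁ - n₃ = m₂ * (δ + n₁ - n₃ + β) := by
    rw [factor, hm₂, root_mul_antiShapleyFactor hβ hμ, ← gap]; ring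
  have n₁_periodicity := n₁_periodicity_of_m₂_periodicity (by rw [hn₁, hm₂]; ring) m₂_periodicity
  have sum_n : n₁ + n₂ + n₃ = 1 + β := by linear_combination 2 * hn₁ + n₂_eq - gap
  have sum_m : m₁ + 2 * m₂ = 1 - β := by linear_combination hm₁ + 2 * hm₂
  exact ⟨n₂_periodicity, n₃_periodicity_of_sum_eq sum_n n₂_periodicity n₁_periodicity,
    n₁_periodicity, m₂_periodicity, m₁_periodicity_of_m₂_periodicity sum_m hδ m₂_periodicity⟩

end Solution

/-- if β ∈ (0,1], μ is a root of g_β, and m₁,m₂,m₃,n₁,n₂,n₃ are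
given by the anticlockwise solution formulas, with δ = β(m₂−m₁)+(1+β)(n₁−n₃),
then the five periodicity equations of the anticlockwise (anti-Shapley) orbit
hold. -/
theorem stmt12 (β μ : ℝ) (hβ : β ∈ Set.Ioc (0 : ℝ) 1) (hμ : gAnti β μ = 0)
    (m1 m2 m3 n1 n2 n3 δ : ℝ)
    (hm2 : m2 = μ) (hm3 : m3 = μ)
    (hm1 : m1 = 1 - β - 2*μ)
    (hn1 : n1 = β - μ*β)
    (hn2 : n2 = (2*β^2 + 1 - 3*μ*β^3 - 5*μ*β^2 - 2*μ*β - 2*μ + 3*μ^2*β^2 + 3*μ^2*β + 3*μ^2*β^3)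
                  /(1 + β + β^2))
    (hn3 : n3 = -(β^2 - β - 4*μ*β^3 - 6*μ*β^2 - 3*μ*β - 2*μ + 3*μ^2*β^2 + 3*μ^2*β + 3*μ^2*β^3)
                  /(1 + β + β^2))
    (hδ : δ = β*(m2 - m1) + (1 + β)*(n1 - n3)) :
    n1*β = n2*(δ + n1 - n3 + β) ∧
    n1 - n3 + n2*β + δ = n3*(δ + n1 - n3 + β) ∧
    n1*β + β*δ = n1*(δ + n1 - n3 + β) ∧
    m2*β + n1 - n3 = m2*(δ + n1 - n3 + β) ∧
    m2*β - β*δ = m1*(δ + n1 - n3 + β) := by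
  have := hβ.1
  exact stmt12_general (by positivity) hμ hm2 hm1 hn1 hn2 hn3 hδ
end

section
/- Let β ∈ (0,1). (i) If β ≤ σ, then for every X ≥ 0 the iterates F_βⁿ(X) converge to 0 as n → ∞ (so trajectories on the indifference set J spiral into the interior equilibrium). (ii) If β > σ, then for every X > 0 the iterates F_βⁿ(X) converge to X*_β = (1 − β + β²)(β² + β − 1)/((2−β)(1+β)²) as n → ∞ (so trajectories on J converge to the periodic orbit Γ). This is the Hopf-like bifurcation at β = σ of the dynamics on J. -/
/-!
Up to the order of the factors, `F_β` is a linear fractional map `x ↦ a x / (b x + c)`. In the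
coordinate `y = x⁻¹` this is the affine map `y ↦ r y + b / a` with `r = c / a`. For `1 ≤ r` its
orbits on the positive axis escape to infinity, so `x → 0`; for `r < 1` it is a contraction with
fixed point `b / (a - c)`. The bifurcation takes place at `r = 1`, and
`a - c = 3 (1 - β + β²) (β² + β - 1)` changes sign exactly at the golden mean.
-/

/-- The one-dimensional return map on the indifference set J of the Shapley
family. -/
noncomputable def retMap (β X : ℝ) : ℝ :=
  X*(1 + β)*(1 + 2*β)*(1 - β + β^2)
    / ((2 - β)*(3*(1 + β)^2*X + (2 + β)*(1 - β + β^2)))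

open Filter Finset Topology

/-- The linear fractional map `x ↦ a x / (b x + c)` fixing `0`: the normal form of `retMap β`.
At a pole its value is the junk value `0`. -/
def linFrac {K : Type*} [Field K] (a b c x : K) : K :=
  a * x / (b * x + c)

namespace linFrac

section Field

variable {K : Type*} [Field K]

theorem iterate_apply_zero (a b c : K) (n : ℕ) : (linFrac a b c)^[n] 0 = 0 :=
  Function.iterate_fixed (by simp [linFrac]) n

theorem inv_eq {a b c x : K} (ha : a ≠ 0) (hx : x ≠ 0) :
    (linFrac a b c x)⁻¹ = c / a * x⁻¹ + b / a := by
  rw [linFrac, inv_div]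
  field_simp
  ring

end Field

section LinearOrderedField

variable {K : Type*} [Field K] [LinearOrder K] [IsStrictOrderedRing K] {a b c x : K}

theorem iterate_pos (ha : 0 < a) (hb : 0 ≤ b) (hc : 0 < c) (hx : 0 < x) (n : ℕ) :
    0 < (linFrac a b c)^[n] x := by
  induction n with
  | zero => exact hx
  | succ n ih =>
    rw [Function.iterate_succ_apply', linFrac]
    positivity

theorem inv_iterate (ha : 0 < a) (hb : 0 ≤ b) (hc : 0 < c) (hx : 0 < x) (n : ℕ) :
    ((linFrac a b c)^[n] x)⁻¹ = (c / a) ^ n * x⁻¹ + b / a * ∑ i ∈ range n, (c / a) ^ i := by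
  induction n with
  | zero => simp
  | succ n ih =>
    rw [Function.iterate_succ_apply', inv_eq ha.ne' (iterate_pos ha hb hc hx n).ne', ih,
      geom_sum_succ]
    ring

variable [Archimedean K] [TopologicalSpace K] [OrderTopology K]

theorem tendsto_iterate_zero (ha : 0 < a) (hb : 0 < b) (hac : a ≤ c) (hx : 0 ≤ x) :
    Tendsto (fun n => (linFrac a b c)^[n] x) atTop (𝓝 0) := by
  obtain rfl | hx := hx.eq_or_lt
  · simp only [iterate_apply_zero, tendsto_const_nhds]
  have hc : 0 < c := ha.trans_le hac
  have hsum (n : ℕ) : (n : K) ≤ ∑ i ∈ range n, (c / a) ^ i := by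
    simpa using card_nsmul_le_sum (range n) (fun i => (c / a) ^ i) 1
      fun i _ => one_le_pow₀ ((one_le_div ha).2 hac)
  have hinv : Tendsto (fun n => ((linFrac a b c)^[n] x)⁻¹) atTop atTop := by
    refine tendsto_atTop_mono (fun n => ?_)
      (tendsto_natCast_atTop_atTop.const_mul_atTop (div_pos hb ha))
    calc b / a * (n : K) ≤ b / a * ∑ i ∈ range n, (c / a) ^ i := by gcongr; exact hsum n
      _ ≤ (c / a) ^ n * x⁻¹ + b / a * ∑ i ∈ range n, (c / a) ^ i :=
        le_add_of_nonneg_left (by positivity)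
      _ = ((linFrac a b c)^[n] x)⁻¹ := (inv_iterate ha hb.le hc hx n).symm
  simpa only [Function.comp_def, inv_inv] using tendsto_inv_atTop_zero.comp hinv

theorem tendsto_iterate_fixedPt (hb : 0 < b) (hc : 0 < c) (hca : c < a) (hx : 0 < x) :
    Tendsto (fun n => (linFrac a b c)^[n] x) atTop (𝓝 ((a - c) / b)) := by
  have ha : 0 < a := hc.trans hca
  have hr : c / a < 1 := (div_lt_one ha).2 hca
  have hpow : Tendsto (fun n : ℕ => (c / a) ^ n) atTop (𝓝 0) :=
    tendsto_pow_atTop_nhds_zero_of_lt_one (by positivity) hr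
  have hsum : Tendsto (fun n => ∑ i ∈ range n, (c / a) ^ i) atTop (𝓝 (a / (a - c))) := by
    have hlim : (0 - 1) / (c / a - 1) = a / (a - c) := by
      rw [div_sub_one ha.ne', div_div_eq_mul_div, ← neg_sub a c, zero_sub, neg_one_mul,
        neg_div_neg_eq]
    simpa only [geom_sum_eq hr.ne, hlim] using (hpow.sub_const 1).div_const (c / a - 1)
  have hinv : Tendsto (fun n => ((linFrac a b c)^[n] x)⁻¹) atTop (𝓝 (b / (a - c))) := by
    simpa only [inv_iterate ha hb.le hc hx, zero_mul, zero_add, div_mul_div_cancel₀ ha.ne']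
      using (hpow.mul_const x⁻¹).add (hsum.const_mul (b / a))
  simpa only [inv_inv, inv_div] using hinv.inv₀ (div_pos hb (sub_pos.2 hca)).ne'

end LinearOrderedField

end linFrac

theorem retMap_eq_linFrac (β : ℝ) :
    retMap β = linFrac ((1 + β) * (1 + 2 * β) * (1 - β + β ^ 2))
      (3 * ((2 - β) * (1 + β) ^ 2)) ((2 - β) * (2 + β) * (1 - β + β ^ 2)) := by
  funext X
  rw [retMap, linFrac]
  congr 1 <;> ring

theorem sq_add_self_sub_one_nonpos_iff {x : ℝ} (hx : -1 / 2 ≤ x) :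
    x ^ 2 + x - 1 ≤ 0 ↔ x ≤ (√5 - 1) / 2 := by
  calc x ^ 2 + x - 1 ≤ 0 ↔ (2 * x + 1) ^ 2 ≤ 5 := by constructor <;> intro h <;> linarith
    _ ↔ 2 * x + 1 ≤ √5 := (Real.le_sqrt (by linarith) (by norm_num)).symm
    _ ↔ x ≤ (√5 - 1) / 2 := by constructor <;> intro h <;> linarith

theorem stmt17_general (β : ℝ) (hβ : β ∈ Set.Ioo (-1 / 2 : ℝ) 2) :
    (β ≤ (√5 - 1) / 2 → ∀ X : ℝ, 0 ≤ X →
      Tendsto (fun n => (retMap β)^[n] X) atTop (𝓝 0)) ∧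
    ((√5 - 1) / 2 < β → ∀ X : ℝ, 0 < X →
      Tendsto (fun n => (retMap β)^[n] X) atTop
        (𝓝 ((1 - β + β ^ 2) * (β ^ 2 + β - 1) / ((2 - β) * (1 + β) ^ 2)))) := by
  obtain ⟨hβ₁, hβ₂⟩ := hβ
  have h₁ : 0 < 1 + β := by linarith
  have h₂ : 0 < 1 + 2 * β := by linarith
  have h₃ : 0 < 2 + β := by linarith
  have hq : 0 < 1 - β + β ^ 2 := by nlinarith
  have hsub : (1 + β) * (1 + 2 * β) * (1 - β + β ^ 2) - (2 - β) * (2 + β) * (1 - β + β ^ 2) =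
      3 * ((1 - β + β ^ 2) * (β ^ 2 + β - 1)) := by ring
  have hiff := sq_add_self_sub_one_nonpos_iff hβ₁.le
  rw [retMap_eq_linFrac, ← hiff, ← lt_iff_lt_of_le_iff_le hiff]
  refine ⟨fun hσ X hX => ?_, fun hσ X hX => ?_⟩
  · have hac := mul_nonpos_of_nonneg_of_nonpos three_pos.le
      (mul_nonpos_of_nonneg_of_nonpos hq.le hσ)
    rw [← hsub, sub_nonpos] at hac
    exact linFrac.tendsto_iterate_zero (by positivity) (by positivity) hac hX
  · have hca := mul_pos three_pos (mul_pos hq hσ)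
    rw [← hsub, sub_pos] at hca
    have hlim := linFrac.tendsto_iterate_fixedPt (b := 3 * ((2 - β) * (1 + β) ^ 2))
      (by positivity) (by positivity) hca hX
    rwa [hsub, mul_div_mul_left _ _ three_ne_zero] at hlim

/-- the Hopf-like bifurcation at β = σ = (√5−1)/2 of the flow on
the indifference set J: for β ∈ (0,1], if β ≤ σ then all iterates of F_β from
X ≥ 0 tend to 0, while if β > σ they tend, from any X > 0, to the fixed point
X*_β = (1−β+β²)(β²+β−1)/((2−β)(1+β)²). -/
theorem stmt17 (β : ℝ) (hβ : β ∈ Set.Ioo (0 : ℝ) 1) :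
    (β ≤ (Real.sqrt 5 - 1)/2 → ∀ X : ℝ, 0 ≤ X →
      Filter.Tendsto (fun n => (retMap β)^[n] X) Filter.atTop (nhds 0)) ∧
    ((Real.sqrt 5 - 1)/2 < β → ∀ X : ℝ, 0 < X →
      Filter.Tendsto (fun n => (retMap β)^[n] X) Filter.atTop
        (nhds ((1 - β + β^2)*(β^2 + β - 1)/((2 - β)*(1 + β)^2)))) :=
  stmt17_general β (Set.Ioo_subset_Ioo (by norm_num) one_le_two hβ)
end
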